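/- Let α > 1/4 and s = 1/2 + α. Then there exists a constant C > 0 such that for every u₀ ∈ H^s(𝕋²), ‖W(·)u₀‖_{L²([0,1]; L^∞(𝕋²))} ≤ C ‖u₀‖_{H^s(𝕋²)}. -/

import Mathlib

/-!
The estimate is proved by a dyadic decomposition and a bilinear `L²` argument.

Frequencies are sorted into shells of size `N = 2^j`, each split further according to the sign of
the first coordinate, so that on one piece the phase is `σ(m² + n²)` with `σ` constant. For the
corresponding part `u` of the solution, `sup |u|² = sup |u²|` is at most `∑ₖ |f_k(t)|`, where the
`f_k` are the spatial Fourier coefficients of `u²` (`norm_sq_le_sum_sqCoef`). There are `O(N²)`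
of them, and each is an exponential sum in time with integer frequencies in which a given frequency
occurs `O(N)` times: prescribing `k₁ + k₂` and `|k₁|² + |k₂|²` places `k₁` on a circle, which
meets each of the `O(N)` vertical lines at most twice (`card_resonant_le`; on the piece `m = 0` the
same count is immediate). Cauchy–Schwarz and orthogonality in time give
`∫ sup |u|² dt ≲ (N² · N)^{1/2} ‖u‖²_{L²} = N^{3/2} ‖u‖²_{L²}`
(`integral_sum_sqCoef_le`, `integral_shellMajorant_le`), a loss of `3/4` of a derivative. Since
`s = 1/2 + α > 3/4`, the excess `ε = s - 3/4` pays for the summation over the shells through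
Cauchy–Schwarz with weights `2^{±εj}` (`enorm_sq_toFun_Wgrp_le`).

The summation takes place in `ℝ≥0∞`, so that convergence and measurability questions for the supremum
norm never arise.
-/


open Complex MeasureTheory Filter Topology Set
open scoped Real BigOperators ENNReal

noncomputable section

/-- A (distributional) function on the torus `𝕋² = ℝ²/(2πℤ)²` is represented by its
sequence of Fourier coefficients, indexed by `ℤ × ℤ`. -/
abbrev CoefSeq : Type := ℤ × ℤ → ℂ

/-- Squared `L²(𝕋²)` norm, via Parseval's identity. -/
def l2NormSq (a : CoefSeq) : ℝ := ∑' mn : ℤ × ℤ, ‖a mn‖ ^ 2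

/-- The `L²(𝕋²)` norm. -/
def l2Norm (a : CoefSeq) : ℝ := Real.sqrt (l2NormSq a)

/-- The Sobolev weight `(1 + m² + n²)^s`. -/
def sobWeight (s : ℝ) (mn : ℤ × ℤ) : ℝ :=
  (1 + (mn.1 : ℝ) ^ 2 + (mn.2 : ℝ) ^ 2) ^ s

/-- Squared `H^s(𝕋²)` norm: `Σ (1+m²+n²)^s |ĝ(m,n)|²`. -/
def hsNormSq (s : ℝ) (a : CoefSeq) : ℝ := ∑' mn : ℤ × ℤ, sobWeight s mn * ‖a mn‖ ^ 2

/-- The `H^s(𝕋²)` norm. -/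
def hsNorm (s : ℝ) (a : CoefSeq) : ℝ := Real.sqrt (hsNormSq s a)

/-- Membership in `H^s(𝕋²)`. -/
def InHs (s : ℝ) (a : CoefSeq) : Prop :=
  Summable (fun mn : ℤ × ℤ => sobWeight s mn * ‖a mn‖ ^ 2)

/-- Membership in `H^∞(𝕋²) = ∩_{s ≥ 0} H^s(𝕋²)`. -/
def InHinf (a : CoefSeq) : Prop := ∀ s : ℝ, 0 ≤ s → InHs s a

/-- The (2π-periodic) function on `ℝ²` represented by the coefficients `a`. -/
def toFun (a : CoefSeq) (x y : ℝ) : ℂ :=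
  ∑' mn : ℤ × ℤ, a mn * Complex.exp (Complex.I * ((mn.1 : ℂ) * x + (mn.2 : ℂ) * y))

/-- The `L^∞(𝕋²)` norm of the function represented by `a`. -/
def supNorm (a : CoefSeq) : ℝ := ⨆ p : ℝ × ℝ, ‖toFun a p.1 p.2‖

/-- Fourier multiplier of `∂ₓ`: `(∂ₓf)^(m,n) = i·m·f̂(m,n)`. -/
def dxOp (a : CoefSeq) : CoefSeq := fun mn => Complex.I * (mn.1 : ℂ) * a mn

/-- Fourier multiplier of `∂_y`: `(∂_yf)^(m,n) = i·n·f̂(m,n)`. -/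
def dyOp (a : CoefSeq) : CoefSeq := fun mn => Complex.I * (mn.2 : ℂ) * a mn

/-- The `L^∞(𝕋²)` norm of the spatial gradient `∇f = (∂ₓf, ∂_yf)`. -/
def gradSupNorm (a : CoefSeq) : ℝ :=
  ⨆ p : ℝ × ℝ, Real.sqrt (‖toFun (dxOp a) p.1 p.2‖ ^ 2 + ‖toFun (dyOp a) p.1 p.2‖ ^ 2)

/-- Fourier multiplier of `𝓗Δ`, where `(𝓗f)^(m,n) = -i·sgn(m)·f̂(m,n)` (zero for `m = 0`)
and `(Δf)^(m,n) = -(m²+n²)·f̂(m,n)`; hence `(𝓗Δf)^(m,n) = i·sgn(m)·(m²+n²)·f̂(m,n)`. -/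
def hilbertLap (a : CoefSeq) : CoefSeq := fun mn =>
  Complex.I * (mn.1.sign : ℂ) * (((mn.1 : ℝ) ^ 2 + (mn.2 : ℝ) ^ 2 : ℝ) : ℂ) * a mn

/-- Fourier coefficients of a product of two functions on the torus (convolution). -/
def convOp (a b : CoefSeq) : CoefSeq := fun mn => ∑' pq : ℤ × ℤ, a pq * b (mn - pq)

/-- The function represented by `a` is real-valued. -/
def RealCoef (a : CoefSeq) : Prop := ∀ mn : ℤ × ℤ, a (-mn) = starRingEnd ℂ (a mn)

/-- `∫₀^{2π} f(x,y) dx = 0` for a.e. `y ∈ 𝕋`. -/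
def ZeroXMean (a : CoefSeq) : Prop := ∀ n : ℤ, a (0, n) = 0

/-- `u` solves `u_t + 𝓗Δu + u·uₓ = 0` on the time set `D`, coefficientwise
(i.e. in the sense of distributions on the torus). -/
def IsSolutionOn (D : Set ℝ) (u : ℝ → CoefSeq) : Prop :=
  ∀ t ∈ D, ∀ mn : ℤ × ℤ,
    HasDerivWithinAt (fun τ => u τ mn)
      (-(hilbertLap (u t) mn) - convOp (u t) (dxOp (u t)) mn) D t

/-- Continuity of `u : D → H^s(𝕋²)`. -/
def ContHsOn (s : ℝ) (D : Set ℝ) (u : ℝ → CoefSeq) : Prop :=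
  ∀ t₀ ∈ D, Tendsto (fun t => hsNorm s (fun mn => u t mn - u t₀ mn))
    (nhdsWithin t₀ D) (nhds 0)

/-- The unitary group `W(t)` associated with the linear part of the 2D Benjamin–Ono
equation: `(W(t)u₀)^(m,n) = e^{-it·sgn(m)(m²+n²)} û₀(m,n)`. -/
def Wgrp (t : ℝ) (a : CoefSeq) : CoefSeq := fun mn =>
  Complex.exp (-Complex.I * (t : ℂ) * (mn.1.sign : ℂ) *
    (((mn.1 : ℝ) ^ 2 + (mn.2 : ℝ) ^ 2 : ℝ) : ℂ)) * a mn

/-! ### Exponential sums in time -/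

theorem integral_exp_int (n : ℤ) :
    ∫ t in (0:ℝ)..(2 * π), Complex.exp (Complex.I * (n : ℂ) * (t : ℂ)) =
      if n = 0 then (2 * π : ℂ) else 0 := by
  split_ifs with h
  · simp [h]
  · have hc : Complex.I * (n : ℂ) ≠ 0 := mul_ne_zero Complex.I_ne_zero (by exact_mod_cast h)
    rw [integral_exp_mul_complex hc]
    have : Complex.I * (n : ℂ) * ((2 * π : ℝ) : ℂ) = n * (2 * π * Complex.I) := by
      push_cast; ring
    rw [this, Complex.exp_int_mul_two_pi_mul_I]
    simp

/-- Almost orthogonality: if each frequency `ψ q` is attained at most `K` times, the mean square of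
the exponential sum over a period exceeds the sum of the squared coefficients by at most the
factor `K`. Only pairs with `ψ q = ψ r` survive integration; each is split by
`|c_q c_r| ≤ (|c_q|² + |c_r|²) / 2`. -/
theorem integral_norm_sq_expsum_le {ι : Type*} (P : Finset ι) (c : ι → ℂ) (ψ : ι → ℤ) (K : ℕ)
    (hK : ∀ q ∈ P, (P.filter fun r => ψ r = ψ q).card ≤ K) :
    ∫ t in (0:ℝ)..(2 * π), ‖∑ q ∈ P, c q * Complex.exp (Complex.I * (ψ q : ℂ) * (t : ℂ))‖ ^ 2 ≤
      2 * π * K * ∑ q ∈ P, ‖c q‖ ^ 2 := by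
  have hexp : ∀ t : ℝ,
      ((‖∑ q ∈ P, c q * Complex.exp (Complex.I * (ψ q : ℂ) * (t : ℂ))‖ ^ 2 : ℝ) : ℂ) =
      ∑ q ∈ P, ∑ r ∈ P, c q * starRingEnd ℂ (c r) *
        Complex.exp (Complex.I * ((ψ q - ψ r : ℤ) : ℂ) * (t : ℂ)) := by
    intro t
    rw [← Complex.normSq_eq_norm_sq, Complex.normSq_eq_conj_mul_self, mul_comm, map_sum,
      Finset.sum_mul_sum]
    refine Finset.sum_congr rfl fun q _ => Finset.sum_congr rfl fun r _ => ?_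
    rw [map_mul, ← Complex.exp_conj]
    have : Complex.I * ((ψ q - ψ r : ℤ) : ℂ) * (t : ℂ) =
        Complex.I * (ψ q : ℂ) * (t : ℂ) +
          starRingEnd ℂ (Complex.I * (ψ r : ℂ) * (t : ℂ)) := by
      simp only [map_mul, Complex.conj_I, Complex.conj_ofReal, map_intCast]
      push_cast; ring
    rw [this, Complex.exp_add]
    ring
  have hint : ((∫ t in (0:ℝ)..(2 * π),
      ‖∑ q ∈ P, c q * Complex.exp (Complex.I * (ψ q : ℂ) * (t : ℂ))‖ ^ 2 : ℝ) : ℂ) =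
      ∑ q ∈ P, ∑ r ∈ P, c q * starRingEnd ℂ (c r) *
        (if ψ r = ψ q then (2 * π : ℂ) else 0) := by
    rw [← intervalIntegral.integral_ofReal]
    simp_rw [hexp]
    rw [intervalIntegral.integral_finsetSum
      (fun q _ => Continuous.intervalIntegrable (by fun_prop) _ _)]
    refine Finset.sum_congr rfl fun q _ => ?_
    rw [intervalIntegral.integral_finsetSum
      (fun q _ => Continuous.intervalIntegrable (by fun_prop) _ _)]
    refine Finset.sum_congr rfl fun r _ => ?_
    rw [intervalIntegral.integral_const_mul, integral_exp_int]
    simp only [sub_eq_zero, eq_comm]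
  have hcomm : ∑ q ∈ P, ∑ r ∈ P, (if ψ r = ψ q then 2 * π * ‖c r‖ ^ 2 else 0) =
      ∑ q ∈ P, ∑ r ∈ P, (if ψ r = ψ q then 2 * π * ‖c q‖ ^ 2 else 0) := by
    rw [Finset.sum_comm]
    refine Finset.sum_congr rfl fun q _ => Finset.sum_congr rfl fun r _ => ?_
    simp only [eq_comm]
  have hdiag : ∑ q ∈ P, ∑ r ∈ P, (if ψ r = ψ q then 2 * π * ‖c q‖ ^ 2 else 0) ≤
      2 * π * K * ∑ q ∈ P, ‖c q‖ ^ 2 := by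
    rw [Finset.mul_sum]
    refine Finset.sum_le_sum fun q hq => ?_
    rw [← Finset.sum_filter, Finset.sum_const, nsmul_eq_mul]
    have h1 : ((P.filter fun r => ψ r = ψ q).card : ℝ) ≤ K := by exact_mod_cast hK q hq
    have h2 : 0 ≤ 2 * π * ‖c q‖ ^ 2 := by positivity
    nlinarith [mul_le_mul_of_nonneg_right h1 h2]
  calc _ ≤ |∫ t in (0:ℝ)..(2 * π),
      ‖∑ q ∈ P, c q * Complex.exp (Complex.I * (ψ q : ℂ) * (t : ℂ))‖ ^ 2| := le_abs_self _
    _ = ‖∑ q ∈ P, ∑ r ∈ P, c q * starRingEnd ℂ (c r) *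
        (if ψ r = ψ q then (2 * π : ℂ) else 0)‖ := by
        rw [← hint, Complex.norm_real, Real.norm_eq_abs]
    _ ≤ ∑ q ∈ P, ∑ r ∈ P, ((if ψ r = ψ q then 2 * π * ‖c q‖ ^ 2 else 0) +
          (if ψ r = ψ q then 2 * π * ‖c r‖ ^ 2 else 0)) / 2 := by
        refine (norm_sum_le _ _).trans (Finset.sum_le_sum fun q _ =>
          (norm_sum_le _ _).trans (Finset.sum_le_sum fun r _ => ?_))
        rw [norm_mul, norm_mul, RCLike.norm_conj]
        split_ifs
        · have : ‖(2 * π : ℂ)‖ = 2 * π := by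
            simp [abs_of_pos Real.pi_pos]
          rw [this]
          nlinarith [mul_nonneg Real.pi_pos.le (sq_nonneg (‖c q‖ - ‖c r‖))]
        · simp
    _ = (∑ q ∈ P, ∑ r ∈ P, (if ψ r = ψ q then 2 * π * ‖c q‖ ^ 2 else 0) +
          ∑ q ∈ P, ∑ r ∈ P, (if ψ r = ψ q then 2 * π * ‖c r‖ ^ 2 else 0)) / 2 := by
        simp_rw [← Finset.sum_div, Finset.sum_add_distrib]
    _ ≤ _ := by rw [hcomm]; linarith

/-- Cauchy–Schwarz against the constant function, obtained by expanding
`0 ≤ ∫ (2πG - ∫ G)²`. -/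
theorem sq_integral_le (G : ℝ → ℝ) (hG : Continuous G) :
    (∫ t in (0:ℝ)..(2 * π), G t) ^ 2 ≤ 2 * π * ∫ t in (0:ℝ)..(2 * π), G t ^ 2 := by
  set A := ∫ t in (0:ℝ)..(2 * π), G t with hA
  have h0 : 0 ≤ ∫ t in (0:ℝ)..(2 * π), (2 * π * G t - A) ^ 2 :=
    intervalIntegral.integral_nonneg (by positivity) fun t _ => sq_nonneg _
  have h1 : ∫ t in (0:ℝ)..(2 * π), (2 * π * G t - A) ^ 2 =
      (2 * π) ^ 2 * (∫ t in (0:ℝ)..(2 * π), G t ^ 2) - 2 * (2 * π) * A * A +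
        2 * π * A ^ 2 := by
    have : ∀ t, (2 * π * G t - A) ^ 2 =
        (2 * π) ^ 2 * G t ^ 2 - 2 * (2 * π) * A * G t + A ^ 2 := fun t => by ring
    simp_rw [this]
    rw [intervalIntegral.integral_add (Continuous.intervalIntegrable (by fun_prop) _ _)
      (Continuous.intervalIntegrable (by fun_prop) _ _),
      intervalIntegral.integral_sub (Continuous.intervalIntegrable (by fun_prop) _ _)
      (Continuous.intervalIntegrable (by fun_prop) _ _),
      intervalIntegral.integral_const_mul, intervalIntegral.integral_const_mul,
      intervalIntegral.integral_const, ← hA, smul_eq_mul]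
    ring
  have hpi := Real.pi_pos
  rw [h1] at h0
  have : 0 ≤ (2 * π) * (2 * π * (∫ t in (0:ℝ)..(2 * π), G t ^ 2) - A ^ 2) := by
    linarith
  have := nonneg_of_mul_nonneg_right this (by positivity)
  linarith

/-! ### The square of a frequency-localised solution -/

/-- The `k`-th spatial Fourier coefficient, at time `t`, of the square of the evolution
`∑_{l ∈ S} a_l e^{-itφ(l)} e^{il·x}` with phase function `φ`. -/
def sqCoef (S : Finset (ℤ × ℤ)) (φ : ℤ × ℤ → ℤ) (a : CoefSeq) (k : ℤ × ℤ) (t : ℝ) : ℂ :=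
  ∑ q ∈ (S ×ˢ S).filter (fun q => q.1 + q.2 = k),
    a q.1 * a q.2 * Complex.exp (Complex.I * ((-(φ q.1 + φ q.2) : ℤ) : ℂ) * (t : ℂ))

theorem continuous_sqCoef (S : Finset (ℤ × ℤ)) (φ : ℤ × ℤ → ℤ) (a : CoefSeq) (k : ℤ × ℤ) :
    Continuous (sqCoef S φ a k) := by
  unfold sqCoef; fun_prop

/-- A trigonometric polynomial `u` satisfies `|u|² = |u²|`, which is at most the sum of the absolute
values of the Fourier coefficients of `u²`. The bound is uniform in the space variable, so it
controls the supremum norm. -/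
theorem norm_sq_le_sum_sqCoef (S T : Finset (ℤ × ℤ)) (φ : ℤ × ℤ → ℤ) (a : CoefSeq)
    (hT : ∀ k ∈ S, ∀ l ∈ S, k + l ∈ T) (t x y : ℝ) :
    ‖∑ k ∈ S, Complex.exp (-Complex.I * (t : ℂ) * (φ k : ℂ)) * a k *
      Complex.exp (Complex.I * ((k.1 : ℂ) * x + (k.2 : ℂ) * y))‖ ^ 2 ≤
      ∑ k ∈ T, ‖sqCoef S φ a k t‖ := by
  have key : (∑ k ∈ S, Complex.exp (-Complex.I * (t : ℂ) * (φ k : ℂ)) * a k *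
      Complex.exp (Complex.I * ((k.1 : ℂ) * x + (k.2 : ℂ) * y))) ^ 2 =
      ∑ k ∈ T, sqCoef S φ a k t *
        Complex.exp (Complex.I * ((k.1 : ℂ) * x + (k.2 : ℂ) * y)) := by
    rw [sq, Finset.sum_mul_sum, ← Finset.sum_product', ← Finset.sum_fiberwise_of_maps_to
      (s := S ×ˢ S) (t := T) (g := fun q => q.1 + q.2)
      (fun q hq => hT _ (Finset.mem_product.1 hq).1 _ (Finset.mem_product.1 hq).2)]
    refine Finset.sum_congr rfl fun k _ => ?_
    rw [sqCoef, Finset.sum_mul]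
    refine Finset.sum_congr rfl fun q hq => ?_
    obtain rfl := (Finset.mem_filter.1 hq).2
    have : Complex.I * ((-(φ q.1 + φ q.2) : ℤ) : ℂ) * (t : ℂ) =
      -Complex.I * (t : ℂ) * (φ q.1 : ℂ) + -Complex.I * (t : ℂ) * (φ q.2 : ℂ) := by
      push_cast; ring
    rw [this, Complex.exp_add]
    have : Complex.I * (((q.1 + q.2).1 : ℂ) * x + ((q.1 + q.2).2 : ℂ) * y) =
      Complex.I * ((q.1.1 : ℂ) * x + (q.1.2 : ℂ) * y) +
        Complex.I * ((q.2.1 : ℂ) * x + (q.2.2 : ℂ) * y) := by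
      simp only [Prod.fst_add, Prod.snd_add]
      push_cast; ring
    rw [this, Complex.exp_add]
    ring
  rw [← norm_pow, key]
  refine (norm_sum_le _ _).trans (Finset.sum_le_sum fun k _ => ?_)
  rw [norm_mul]
  have : ‖Complex.exp (Complex.I * ((k.1 : ℂ) * x + (k.2 : ℂ) * y))‖ = 1 := by
    rw [Complex.norm_exp]; simp
  rw [this, mul_one]

/-- The bilinear estimate. `T` contains the Fourier support of the square, and `K` bounds the number
of pairs of frequencies with prescribed sum and prescribed total phase. Cauchy–Schwarz in time and
over `T`, then almost orthogonality in time for each coefficient, produce the factor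
`√(#T · K)`. -/
theorem integral_sum_sqCoef_le (S T : Finset (ℤ × ℤ)) (φ : ℤ × ℤ → ℤ) (a : CoefSeq)
    (hT : ∀ k ∈ S, ∀ l ∈ S, k + l ∈ T) (K : ℕ)
    (hK : ∀ q ∈ S ×ˢ S, ((S ×ˢ S).filter fun r =>
      r.1 + r.2 = q.1 + q.2 ∧ φ r.1 + φ r.2 = φ q.1 + φ q.2).card ≤ K) :
    ∫ t in (0:ℝ)..(2 * π), ∑ k ∈ T, ‖sqCoef S φ a k t‖ ≤
      2 * π * Real.sqrt (T.card * K) * ∑ k ∈ S, ‖a k‖ ^ 2 := by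
  have hc := fun k => continuous_sqCoef S φ a k
  have hk : ∀ k, ∫ t in (0:ℝ)..(2 * π), ‖sqCoef S φ a k t‖ ^ 2 ≤
      2 * π * K * ∑ q ∈ (S ×ˢ S).filter (fun q => q.1 + q.2 = k), ‖a q.1 * a q.2‖ ^ 2 := by
    intro k
    unfold sqCoef
    apply integral_norm_sq_expsum_le ((S ×ˢ S).filter fun q => q.1 + q.2 = k)
      (fun q => a q.1 * a q.2) (fun q => -(φ q.1 + φ q.2)) K
    intro q hq
    obtain ⟨hqS, rfl⟩ := Finset.mem_filter.1 hq
    rw [Finset.filter_filter]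
    simp only [neg_inj]
    exact hK q hqS
  have hsq : (∫ t in (0:ℝ)..(2 * π), ∑ k ∈ T, ‖sqCoef S φ a k t‖) ^ 2 ≤
      (2 * π * Real.sqrt (T.card * K) * ∑ k ∈ S, ‖a k‖ ^ 2) ^ 2 := by
    calc _ ≤ 2 * π * ∫ t in (0:ℝ)..(2 * π), (∑ k ∈ T, ‖sqCoef S φ a k t‖) ^ 2 :=
          sq_integral_le _ (by fun_prop)
      _ ≤ 2 * π * ∫ t in (0:ℝ)..(2 * π), T.card * ∑ k ∈ T, ‖sqCoef S φ a k t‖ ^ 2 := by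
          refine mul_le_mul_of_nonneg_left ?_ (by positivity)
          refine intervalIntegral.integral_mono (by positivity)
            (Continuous.intervalIntegrable (by fun_prop) _ _)
            (Continuous.intervalIntegrable (by fun_prop) _ _) fun t => ?_
          exact sq_sum_le_card_mul_sum_sq
      _ = 2 * π * (T.card * ∑ k ∈ T, ∫ t in (0:ℝ)..(2 * π), ‖sqCoef S φ a k t‖ ^ 2) := by
          rw [intervalIntegral.integral_const_mul, intervalIntegral.integral_finsetSum
            (fun q _ => Continuous.intervalIntegrable (by fun_prop) _ _)]
      _ ≤ 2 * π * (T.card * ∑ k ∈ T, 2 * π * K *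
            ∑ q ∈ (S ×ˢ S).filter (fun q => q.1 + q.2 = k), ‖a q.1 * a q.2‖ ^ 2) := by
          gcongr with k _
          exact hk k
      _ = 2 * π * (T.card * (2 * π * K * (∑ k ∈ S, ‖a k‖ ^ 2) ^ 2)) := by
          rw [← Finset.mul_sum, Finset.sum_fiberwise_of_maps_to
            (s := S ×ˢ S) (t := T) (g := fun q => q.1 + q.2)
            (fun q hq => hT _ (Finset.mem_product.1 hq).1 _ (Finset.mem_product.1 hq).2),
            sq (∑ k ∈ S, ‖a k‖ ^ 2), Finset.sum_mul_sum, ← Finset.sum_product']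
          simp_rw [norm_mul, mul_pow]
      _ = _ := by
          rw [mul_pow, mul_pow, Real.sq_sqrt (by positivity)]
          ring
  exact le_of_sq_le_sq hsq (by positivity)

/-! ### Counting resonant pairs -/

/-- The dispersion relation `sgn(m)(m² + n²)` of `W(t)`. -/
def phase (k : ℤ × ℤ) : ℤ := k.1.sign * (k.1 ^ 2 + k.2 ^ 2)

/-- Resonance count on a set of frequencies of size less than `M` whose first coordinates all have
sign `σ`. For `σ ≠ 0` the first coordinate of `r.1` takes fewer than `2M` values; once it is
fixed, prescribing the sum and the total phase leaves a quadratic equation for the second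
coordinate, with at most two solutions. For `σ = 0` the second coordinate of `r.1` determines
the pair. -/
theorem card_resonant_le (M : ℕ) (σ : ℤ) (S : Finset (ℤ × ℤ))
    (hS : ∀ k ∈ S, |k.1| < M ∧ |k.2| < M ∧ k.1.sign = σ) (q : (ℤ × ℤ) × (ℤ × ℤ)) :
    ((S ×ˢ S).filter fun r =>
      r.1 + r.2 = q.1 + q.2 ∧ phase r.1 + phase r.2 = phase q.1 + phase q.2).card ≤ 4 * M := by
  have hcard : ((Finset.Ioo (-(M:ℤ)) M) ×ˢ (Finset.univ : Finset Bool)).card ≤ 4 * M := by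
    rw [Finset.card_product, Int.card_Ioo]
    simp
    omega
  refine le_trans ?_ hcard
  by_cases hσ : σ = 0
  · refine Finset.card_le_card_of_injOn (fun r => (r.1.2, true)) ?_ ?_
    · intro r hr
      simp only [Finset.coe_filter, Finset.mem_product, Set.mem_ofPred_eq] at hr
      have := abs_lt.1 (hS _ hr.1.1).2.1
      simp [this]
    · intro r hr r' hr' h
      simp only [Finset.coe_filter, Finset.mem_product, Set.mem_ofPred_eq] at hr hr'
      have z : ∀ k ∈ S, k.1 = 0 := fun k hk =>
        Int.sign_eq_zero_iff_zero.1 ((hS k hk).2.2.trans hσ)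
      simp only [Prod.mk.injEq, and_true] at h
      have e := hr.2.1.trans hr'.2.1.symm
      simp only [Prod.ext_iff, Prod.fst_add, Prod.snd_add] at e
      have := z _ hr.1.1
      have := z _ hr.1.2
      have := z _ hr'.1.1
      have := z _ hr'.1.2
      ext <;> omega
    -- The two roots of the quadratic lie on either side of half the prescribed sum, so the
    -- Boolean tells them apart.
  · refine Finset.card_le_card_of_injOn
      (fun r => (r.1.1, decide (2 * r.1.2 ≤ q.1.2 + q.2.2))) ?_ ?_
    · intro r hr
      simp only [Finset.coe_filter, Finset.mem_product, Set.mem_ofPred_eq] at hr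
      have := abs_lt.1 (hS _ hr.1.1).1
      simp [this, le_or_gt]
    · intro r hr r' hr' h
      simp only [Finset.coe_filter, Finset.mem_product, Set.mem_ofPred_eq] at hr hr'
      simp only [Prod.mk.injEq, decide_eq_decide] at h
      obtain ⟨⟨h1, h2⟩, e, p⟩ := hr
      obtain ⟨⟨h1', h2'⟩, e', p'⟩ := hr'
      have pp := p.trans p'.symm
      simp only [phase, (hS _ h1).2.2, (hS _ h2).2.2, (hS _ h1').2.2, (hS _ h2').2.2,
        ← mul_add] at pp
      have pp := mul_left_cancel₀ hσ pp
      simp only [Prod.ext_iff, Prod.fst_add, Prod.snd_add] at e e'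
      obtain ⟨e1, e2⟩ := e
      obtain ⟨e1', e2'⟩ := e'
      obtain ⟨h, hd⟩ := h
      have hm : r.2.1 = r'.2.1 := by omega
      rw [h, hm] at pp
      have s1 : r.2.2 = q.1.2 + q.2.2 - r.1.2 := by omega
      have s2 : r'.2.2 = q.1.2 + q.2.2 - r'.1.2 := by omega
      have : (r.1.2 - r'.1.2) * (r.1.2 + r'.1.2 - (q.1.2 + q.2.2)) = 0 := by
        rw [s1, s2] at pp
        nlinarith
      have hn : r.1.2 = r'.1.2 := by
        rcases mul_eq_zero.1 this with h | h <;> omega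
      ext <;> omega

/-! ### Dyadic shells split by the sign of the first frequency -/

/-- The dyadic scale `⌊log₂ max(|m|, |n|)⌋` (`0` at the origin) of a frequency, together with the
sign of `m`. -/
def label (k : ℤ × ℤ) : ℕ × SignType :=
  (Nat.log 2 (max k.1.natAbs k.2.natAbs), SignType.sign k.1)

theorem abs_lt_of_label {k : ℤ × ℤ} {i : ℕ × SignType} (h : label k = i) :
    |k.1| < (2 ^ (i.1 + 1) : ℕ) ∧ |k.2| < (2 ^ (i.1 + 1) : ℕ) := by
  subst h
  have h := Nat.lt_pow_succ_log_self (b := 2) (by norm_num) (max k.1.natAbs k.2.natAbs)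
  rw [max_lt_iff] at h
  rw [Int.abs_eq_natAbs, Int.abs_eq_natAbs]
  exact ⟨by exact_mod_cast h.1, by exact_mod_cast h.2⟩

theorem four_pow_le_of_label {k : ℤ × ℤ} {i : ℕ × SignType} (h : label k = i) :
    ((2:ℝ) ^ i.1) ^ 2 ≤ 1 + (k.1 : ℝ) ^ 2 + (k.2 : ℝ) ^ 2 := by
  subst h
  have e1 : (k.1 : ℝ) ^ 2 = (k.1.natAbs : ℝ) ^ 2 := by
    rw [Nat.cast_natAbs]; simp
  have e2 : (k.2 : ℝ) ^ 2 = (k.2.natAbs : ℝ) ^ 2 := by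
    rw [Nat.cast_natAbs]; simp
  rw [e1, e2]
  set p := k.1.natAbs
  set q := k.2.natAbs
  change ((2:ℝ) ^ Nat.log 2 (max p q)) ^ 2 ≤ _
  rcases Nat.eq_zero_or_pos (max p q) with h0 | h0
  · rw [h0, Nat.log_zero_right]
    nlinarith [sq_nonneg (p:ℝ), sq_nonneg (q:ℝ)]
  · have h1 : (2:ℝ) ^ Nat.log 2 (max p q) ≤ ((max p q : ℕ) : ℝ) := by
      exact_mod_cast Nat.pow_log_le_self 2 h0.ne'
    have h2 := pow_le_pow_left₀ (by positivity) h1 2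
    refine h2.trans ?_
    rcases max_choice p q with h | h <;> rw [h] <;> nlinarith [sq_nonneg (p:ℝ), sq_nonneg (q:ℝ)]

/-- The finite set of frequencies with label `i`; the ambient square only provides finiteness. -/
def shell (i : ℕ × SignType) : Finset (ℤ × ℤ) :=
  ((Finset.Ioo (-((2 ^ (i.1 + 1) : ℕ) : ℤ)) (2 ^ (i.1 + 1) : ℕ)) ×ˢ
    (Finset.Ioo (-((2 ^ (i.1 + 1) : ℕ) : ℤ)) (2 ^ (i.1 + 1) : ℕ))).filter (fun k => label k = i)

theorem mem_shell {k : ℤ × ℤ} {i : ℕ × SignType} : k ∈ shell i ↔ label k = i := by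
  rw [shell, Finset.mem_filter, and_iff_right_iff_imp]
  intro h
  have := abs_lt_of_label h
  rw [Finset.mem_product, Finset.mem_Ioo, Finset.mem_Ioo]
  exact ⟨abs_lt.1 this.1, abs_lt.1 this.2⟩

/-- A square containing all sums of two frequencies of `shell i`. -/
def sumBox (i : ℕ × SignType) : Finset (ℤ × ℤ) :=
  (Finset.Ioo (-(2 * (2 ^ (i.1 + 1) : ℕ) : ℤ)) (2 * (2 ^ (i.1 + 1) : ℕ))) ×ˢ
    (Finset.Ioo (-(2 * (2 ^ (i.1 + 1) : ℕ) : ℤ)) (2 * (2 ^ (i.1 + 1) : ℕ)))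

theorem add_mem_sumBox {i : ℕ × SignType} {k l : ℤ × ℤ} (hk : k ∈ shell i) (hl : l ∈ shell i) :
    k + l ∈ sumBox i := by
  have h1 := abs_lt_of_label (mem_shell.1 hk)
  have h2 := abs_lt_of_label (mem_shell.1 hl)
  simp only [abs_lt] at h1 h2
  simp only [sumBox, Finset.mem_product, Finset.mem_Ioo, Prod.fst_add, Prod.snd_add]
  omega

theorem card_sumBox_le (i : ℕ × SignType) :
    (sumBox i).card ≤ (4 * 2 ^ (i.1 + 1)) * (4 * 2 ^ (i.1 + 1)) := by
  rw [sumBox, Finset.card_product, Int.card_Ioo]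
  apply Nat.mul_le_mul <;> omega

/-- The `ℓ¹` norm, at time `t`, of the Fourier coefficients of the square of the part of `W(t)a`
in `shell i`: a continuous majorant of its squared supremum norm. -/
def shellMajorant (a : CoefSeq) (i : ℕ × SignType) (t : ℝ) : ℝ :=
  ∑ k ∈ sumBox i, ‖sqCoef (shell i) phase a k t‖

theorem continuous_shellMajorant (a : CoefSeq) (i : ℕ × SignType) :
    Continuous (shellMajorant a i) := by
  unfold shellMajorant
  exact continuous_finsetSum _ fun k _ => (continuous_sqCoef _ _ _ _).norm

theorem shellMajorant_nonneg (a : CoefSeq) (i : ℕ × SignType) (t : ℝ) :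
    0 ≤ shellMajorant a i t := Finset.sum_nonneg fun _ _ => norm_nonneg _

/-- At frequency `N = 2^j` there are `O(N²)` output frequencies and `O(N)` resonant pairs, so the
squared `L²_t L^∞` norm loses `O(N^{3/2})`, that is, `3/4` of a derivative. -/
theorem integral_shellMajorant_le (a : CoefSeq) (i : ℕ × SignType) :
    ∫ t in (0:ℝ)..(2 * π), shellMajorant a i t ≤
      2 * π * Real.sqrt (512 * ((2:ℝ) ^ i.1) ^ 3) * ∑ k ∈ shell i, ‖a k‖ ^ 2 := by
  refine (integral_sum_sqCoef_le (shell i) (sumBox i) phase a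
    (fun k hk l hl => add_mem_sumBox hk hl) (4 * 2 ^ (i.1 + 1)) fun q _ =>
      card_resonant_le (2 ^ (i.1 + 1)) i.2 _ (fun k hk => ?_) q).trans ?_
  · have h := mem_shell.1 hk
    refine ⟨(abs_lt_of_label h).1, (abs_lt_of_label h).2, ?_⟩
    rw [Int.sign_eq_sign, ← h]; rfl
  · refine mul_le_mul_of_nonneg_right (mul_le_mul_of_nonneg_left (Real.sqrt_le_sqrt ?_)
      (by positivity)) (by positivity)
    have : ((sumBox i).card : ℝ) ≤ (4 * 2 ^ (i.1 + 1)) * (4 * 2 ^ (i.1 + 1)) := by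
      exact_mod_cast card_sumBox_le i
    push_cast
    calc _ ≤ ((4 * 2 ^ (i.1 + 1)) * (4 * 2 ^ (i.1 + 1))) * (4 * (2:ℝ) ^ (i.1 + 1)) := by
          gcongr
      _ = _ := by ring

/-- The loss `N^{3/2}` at scale `N = 2^j`, multiplied by the factor `N^{2ε}` spent on summing over
scales, is absorbed by the Sobolev weight of order `3/4 + ε`. -/
theorem weight_le (ε : ℝ) (s : ℝ) (hs : s = 3 / 4 + ε) (hε : 0 < ε) {k : ℤ × ℤ}
    {i : ℕ × SignType} (h : label k = i) :
    (((2:ℝ) ^ ε) ^ i.1) ^ 2 * Real.sqrt (512 * ((2:ℝ) ^ i.1) ^ 3) ≤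
      Real.sqrt 512 * sobWeight s k := by
  have h4 := four_pow_le_of_label h
  set N : ℝ := (2:ℝ) ^ i.1 with hN
  have hN0 : 0 < N := by positivity
  have e1 : ((2:ℝ) ^ ε) ^ i.1 = N ^ ε := by
    rw [hN, ← Real.rpow_natCast, ← Real.rpow_natCast, ← Real.rpow_mul (by norm_num),
      ← Real.rpow_mul (by norm_num), mul_comm]
  have e2 : Real.sqrt (512 * N ^ 3) = Real.sqrt 512 * N ^ (3 / 2 : ℝ) := by
    rw [Real.sqrt_mul (by norm_num), Real.sqrt_eq_rpow (N ^ 3), ← Real.rpow_natCast,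
      ← Real.rpow_mul hN0.le]
    norm_num
  have e3 : (N ^ ε) ^ 2 * N ^ (3 / 2 : ℝ) = (N ^ 2) ^ s := by
    rw [← Real.rpow_natCast, ← Real.rpow_mul hN0.le, ← Real.rpow_add hN0, ← Real.rpow_natCast,
      ← Real.rpow_mul hN0.le, hs]
    congr 1
    push_cast; ring
  rw [e1, e2, sobWeight]
  have := Real.rpow_le_rpow (by positivity) h4 (by linarith : 0 ≤ s)
  calc _ = Real.sqrt 512 * ((N ^ ε) ^ 2 * N ^ (3 / 2 : ℝ)) := by ring
    _ ≤ _ := by rw [e3]; gcongr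

/-! ### Summation over the shells -/

theorem tsum_mul_sq_le {ι : Type*} (c y : ι → ℝ≥0∞) :
    (∑' i, c i * y i) ^ 2 ≤ (∑' i, c i ^ 2) * ∑' i, y i ^ 2 := by
  let _ : MeasurableSpace ι := ⊤
  have h := ENNReal.lintegral_mul_le_Lp_mul_Lq (Measure.count : Measure ι)
    Real.HolderConjugate.two_two (f := c) (g := y) measurable_from_top.aemeasurable
    measurable_from_top.aemeasurable
  rw [lintegral_count' measurable_from_top, lintegral_count' measurable_from_top,
    lintegral_count' measurable_from_top] at h
  have h2 := pow_le_pow_left₀ (zero_le) h 2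
  rw [mul_pow] at h2
  have e : ∀ z : ℝ≥0∞, (z ^ (1 / 2 : ℝ)) ^ 2 = z := fun z => by
    rw [← ENNReal.rpow_natCast, ← ENNReal.rpow_mul]; norm_num
  rw [e, e] at h2
  simpa using h2

/-- No summability of `a` is needed: when the defining series diverges, `toFun` takes the junk
value `0`. -/
theorem enorm_toFun_le (a : CoefSeq) (x y : ℝ) :
    ‖toFun a x y‖ₑ ≤ ∑' i, ‖∑ k ∈ shell i,
      a k * Complex.exp (Complex.I * ((k.1 : ℂ) * x + (k.2 : ℂ) * y))‖ₑ := by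
  unfold toFun
  by_cases h : Summable fun k : ℤ × ℤ =>
      a k * Complex.exp (Complex.I * ((k.1 : ℂ) * x + (k.2 : ℂ) * y))
  · rw [← (h.hasSum.tsum_fiberwise label).tsum_eq]
    refine enorm_tsum_le_tsum_enorm.trans (le_of_eq (tsum_congr fun i => ?_))
    have : label ⁻¹' {i} = (shell i : Set (ℤ × ℤ)) := by
      ext k; simp [mem_shell]
    rw [this, Finset.tsum_subtype' (shell i) (fun k : ℤ × ℤ =>
      a k * Complex.exp (Complex.I * ((k.1 : ℂ) * x + (k.2 : ℂ) * y)))]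
  · rw [tsum_eq_zero_of_not_summable h]; simp

/-- Cauchy–Schwarz over the shells with weights `ρ^{-j} · ρ^j`. -/
theorem enorm_sq_toFun_Wgrp_le (ρ : ℝ) (hρ : 0 < ρ) (a : CoefSeq) (t x y : ℝ) :
    ‖toFun (Wgrp t a) x y‖ₑ ^ 2 ≤
      (∑' i : ℕ × SignType, (ENNReal.ofReal (ρ⁻¹ ^ i.1)) ^ 2) *
        ∑' i : ℕ × SignType, ENNReal.ofReal ((ρ ^ i.1) ^ 2 * shellMajorant a i t) := by
  set u : ℕ × SignType → ℂ := fun i => ∑ k ∈ shell i,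
      Wgrp t a k * Complex.exp (Complex.I * ((k.1 : ℂ) * x + (k.2 : ℂ) * y)) with hu
  have hub : ∀ i, ‖u i‖ ^ 2 ≤ shellMajorant a i t := by
    intro i
    refine le_trans (le_of_eq ?_) (norm_sq_le_sum_sqCoef (shell i) (sumBox i) phase a
      (fun k hk l hl => add_mem_sumBox hk hl) t x y)
    simp only [hu, Wgrp, phase]
    push_cast
    simp only [mul_assoc]
  have hsplit : ∀ i, ‖u i‖ₑ = ENNReal.ofReal (ρ⁻¹ ^ i.1) * ENNReal.ofReal (ρ ^ i.1 * ‖u i‖) := by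
    intro i
    rw [← ENNReal.ofReal_mul (by positivity), ← ofReal_norm, ← mul_assoc, ← mul_pow,
      inv_mul_cancel₀ hρ.ne', one_pow, one_mul]
  calc _ ≤ (∑' i, ‖u i‖ₑ) ^ 2 := pow_le_pow_left₀ (zero_le) (enorm_toFun_le _ x y) 2
    _ ≤ _ := by
      simp_rw [hsplit]
      refine (tsum_mul_sq_le _ _).trans ?_
      gcongr with i
      rw [← ENNReal.ofReal_pow (by positivity), mul_pow]
      apply ENNReal.ofReal_le_ofReal
      gcongr
      exact hub i

/-- A pointwise bound passes to `supNorm`; a finite bound makes the real supremum a genuine one,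
and an infinite bound is trivial. -/
theorem ofReal_supNorm_sq_le (a : CoefSeq) (B : ℝ≥0∞) (h : ∀ x y, ‖toFun a x y‖ₑ ^ 2 ≤ B) :
    ENNReal.ofReal (supNorm a ^ 2) ≤ B := by
  rcases eq_or_ne B ⊤ with rfl | hB
  · exact le_top
  have h1 : ∀ p : ℝ × ℝ, ‖toFun a p.1 p.2‖ ≤ Real.sqrt B.toReal := fun p => by
    apply Real.le_sqrt_of_sq_le
    have := ENNReal.toReal_mono hB (h p.1 p.2)
    simpa using this
  have h2 : supNorm a ≤ Real.sqrt B.toReal := ciSup_le h1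
  have h3 : 0 ≤ supNorm a := Real.iSup_nonneg fun _ => norm_nonneg _
  refine ENNReal.ofReal_le_of_le_toReal ?_
  calc _ ≤ Real.sqrt B.toReal ^ 2 := by gcongr
    _ = _ := Real.sq_sqrt ENNReal.toReal_nonneg

theorem lintegral_shellMajorant_le (ε : ℝ) (s : ℝ) (hs : s = 3 / 4 + ε) (hε : 0 < ε)
    (a : CoefSeq) (i : ℕ × SignType) :
    ∫⁻ t in Set.Icc (0:ℝ) 1, ENNReal.ofReal ((((2:ℝ) ^ ε) ^ i.1) ^ 2 * shellMajorant a i t) ≤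
      ENNReal.ofReal (2 * π * Real.sqrt 512) *
        ∑ k ∈ shell i, ENNReal.ofReal (sobWeight s k * ‖a k‖ ^ 2) := by
  have hw : ∀ k, 0 ≤ sobWeight s k := fun k => by unfold sobWeight; positivity
  have hc : Continuous fun t => (((2:ℝ) ^ ε) ^ i.1) ^ 2 * shellMajorant a i t :=
    continuous_const.mul (continuous_shellMajorant a i)
  have hpi : 1 ≤ 2 * π := by linarith [Real.pi_gt_three]
  calc _ ≤ ∫⁻ t in Set.Icc (0:ℝ) (2 * π),
        ENNReal.ofReal ((((2:ℝ) ^ ε) ^ i.1) ^ 2 * shellMajorant a i t) := by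
        exact lintegral_mono_set (Set.Icc_subset_Icc_right hpi)
    _ = ENNReal.ofReal (∫ t in (0:ℝ)..(2 * π),
        (((2:ℝ) ^ ε) ^ i.1) ^ 2 * shellMajorant a i t) := by
        rw [intervalIntegral.integral_of_le (by positivity), ← integral_Icc_eq_integral_Ioc,
          ofReal_integral_eq_lintegral_ofReal hc.continuousOn.integrableOn_Icc
            (Filter.Eventually.of_forall fun t =>
              mul_nonneg (by positivity) (shellMajorant_nonneg a i t))]
    _ ≤ ENNReal.ofReal (2 * π * Real.sqrt 512 * ∑ k ∈ shell i, sobWeight s k * ‖a k‖ ^ 2) := by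
        apply ENNReal.ofReal_le_ofReal
        rw [intervalIntegral.integral_const_mul]
        calc _ ≤ (((2:ℝ) ^ ε) ^ i.1) ^ 2 * (2 * π * Real.sqrt (512 * ((2:ℝ) ^ i.1) ^ 3) *
              ∑ k ∈ shell i, ‖a k‖ ^ 2) := by
              gcongr
              exact integral_shellMajorant_le a i
          _ = 2 * π * ∑ k ∈ shell i, (((2:ℝ) ^ ε) ^ i.1) ^ 2 *
              Real.sqrt (512 * ((2:ℝ) ^ i.1) ^ 3) * ‖a k‖ ^ 2 := by
              rw [← Finset.mul_sum]; ring
          _ ≤ 2 * π * ∑ k ∈ shell i, Real.sqrt 512 * sobWeight s k * ‖a k‖ ^ 2 := by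
              refine mul_le_mul_of_nonneg_left (Finset.sum_le_sum fun k hk =>
                mul_le_mul_of_nonneg_right ?_ (sq_nonneg _)) (by positivity)
              exact weight_le ε s hs hε (mem_shell.1 hk)
          _ = _ := by
              simp_rw [mul_assoc (Real.sqrt 512)]
              rw [← Finset.mul_sum]; ring
    _ = _ := by
        rw [ENNReal.ofReal_mul (by positivity), ENNReal.ofReal_sum_of_nonneg
          fun k _ => mul_nonneg (hw k) (sq_nonneg _)]

theorem tsum_shell (h : ℤ × ℤ → ℝ≥0∞) : ∑' i, ∑ k ∈ shell i, h k = ∑' k, h k := by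
  have h1 : ∀ i, ∑ k ∈ shell i, h k = ∑' k, if i = label k then h k else 0 := fun i => by
    rw [tsum_eq_sum (s := shell i) fun k hk => if_neg fun e => hk (mem_shell.2 e.symm)]
    exact Finset.sum_congr rfl fun k hk => (if_pos (mem_shell.1 hk).symm).symm
  simp_rw [h1]
  rw [ENNReal.tsum_comm]
  exact tsum_congr fun k => tsum_ite_eq _ _

theorem tsum_shellWeight_ne_top (ρ : ℝ) (hρ : 1 < ρ) :
    ∑' i : ℕ × SignType, (ENNReal.ofReal (ρ⁻¹ ^ i.1)) ^ 2 ≠ ⊤ := by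
  have h0 : 0 < ρ := by linarith
  have hr : (ρ⁻¹) ^ 2 < 1 := by
    have := inv_lt_one_of_one_lt₀ hρ
    exact pow_lt_one₀ (by positivity) this (by norm_num)
  have e : ∀ i : ℕ × SignType, (ENNReal.ofReal (ρ⁻¹ ^ i.1)) ^ 2 =
      ENNReal.ofReal (ρ⁻¹ ^ 2) ^ i.1 := fun i => by
    rw [← ENNReal.ofReal_pow (by positivity), ← ENNReal.ofReal_pow (by positivity),
      ← pow_mul, ← pow_mul, mul_comm]
  simp_rw [e]
  rw [ENNReal.tsum_prod (f := fun (n : ℕ) (_ : SignType) => ENNReal.ofReal (ρ⁻¹ ^ 2) ^ n)]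
  simp_rw [tsum_fintype, Finset.sum_const, nsmul_eq_mul]
  rw [ENNReal.tsum_mul_left, ENNReal.tsum_geometric]
  refine ENNReal.mul_ne_top (by simp) (ENNReal.inv_ne_top.2 ?_)
  exact (tsub_pos_of_lt (by simpa using hr)).ne.symm

/-- **Lemma 3.1, estimate (3.3).** Strichartz estimate on the unit time interval: for
`α > 1/4` and `s = 1/2 + α`, `‖W(·)u₀‖_{L²([0,1];L^∞(𝕋²))} ≤ C ‖u₀‖_{H^s(𝕋²)}`. -/
theorem strichartz_unit_interval (α : ℝ) (hα : 1/4 < α) (s : ℝ) (hsα : s = 1/2 + α) :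
    ∃ C > (0:ℝ), ∀ a : CoefSeq, InHs s a →
      Real.sqrt (∫ t in Set.Icc (0:ℝ) 1, supNorm (Wgrp t a) ^ 2) ≤ C * hsNorm s a := by
  set ε := s - 3 / 4 with hε'
  have hε : 0 < ε := by rw [hε', hsα]; linarith
  have hs : s = 3 / 4 + ε := by rw [hε']; ring
  set ρ : ℝ := 2 ^ ε with hρ'
  have hρ : 1 < ρ := Real.one_lt_rpow (by norm_num) hε
  set A : ℝ≥0∞ := ∑' i : ℕ × SignType, (ENNReal.ofReal (ρ⁻¹ ^ i.1)) ^ 2 with hA'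
  have hA : A ≠ ⊤ := tsum_shellWeight_ne_top ρ hρ
  set C : ℝ := A.toReal * (2 * π * Real.sqrt 512) with hC'
  have hC : 0 ≤ C := by positivity
  refine ⟨Real.sqrt C + 1, by positivity, fun a ha => ?_⟩
  have hw : ∀ k, 0 ≤ sobWeight s k * ‖a k‖ ^ 2 := fun k => by unfold sobWeight; positivity
  have hlin : ∫⁻ t in Set.Icc (0:ℝ) 1, ENNReal.ofReal (supNorm (Wgrp t a) ^ 2) ≤
      ENNReal.ofReal (C * hsNormSq s a) := by
    calc _ ≤ ∫⁻ t in Set.Icc (0:ℝ) 1, A *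
          ∑' i : ℕ × SignType, ENNReal.ofReal ((ρ ^ i.1) ^ 2 * shellMajorant a i t) :=
          lintegral_mono fun t => ofReal_supNorm_sq_le _ _ fun x y =>
            enorm_sq_toFun_Wgrp_le ρ (by linarith) a t x y
      _ = A * ∑' i : ℕ × SignType, ∫⁻ t in Set.Icc (0:ℝ) 1,
          ENNReal.ofReal ((ρ ^ i.1) ^ 2 * shellMajorant a i t) := by
          rw [lintegral_const_mul' _ _ hA, lintegral_tsum fun i => ?_]
          exact (ENNReal.continuous_ofReal.comp
            (continuous_const.mul (continuous_shellMajorant a i))).measurable.aemeasurable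
      _ ≤ A * ∑' i : ℕ × SignType, ENNReal.ofReal (2 * π * Real.sqrt 512) *
          ∑ k ∈ shell i, ENNReal.ofReal (sobWeight s k * ‖a k‖ ^ 2) := by
          gcongr with i
          exact lintegral_shellMajorant_le ε s hs hε a i
      _ = _ := by
          rw [ENNReal.tsum_mul_left, tsum_shell, ← ENNReal.ofReal_tsum_of_nonneg hw ha,
            ENNReal.ofReal_mul hC, hC', ENNReal.ofReal_mul ENNReal.toReal_nonneg,
            ENNReal.ofReal_toReal hA, mul_assoc A, hsNormSq]
  have hint : ∫ t in Set.Icc (0:ℝ) 1, supNorm (Wgrp t a) ^ 2 ≤ C * hsNormSq s a := by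
    -- This comparison needs no measurability of the supremum norm in time: the Bochner integral
    -- of a non-measurable function is `0`.
    refine (Real.le_norm_self _).trans ((norm_integral_le_lintegral_norm _).trans ?_)
    refine ENNReal.toReal_le_of_le_ofReal (mul_nonneg hC (tsum_nonneg hw)) ?_
    simpa only [Real.norm_eq_abs, abs_sq, abs_pow, sq_abs] using hlin
  calc _ ≤ Real.sqrt (C * hsNormSq s a) := Real.sqrt_le_sqrt hint
    _ = Real.sqrt C * hsNorm s a := by rw [Real.sqrt_mul hC, hsNorm]
    _ ≤ _ := by
      have : 0 ≤ hsNorm s a := Real.sqrt_nonneg _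
      nlinarith
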